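/- The FK measure is the unique probability measure with the prescribed single-edge conditional probabilities. Let (V, E, ends, α) be a finite graph with boundary condition, p ∈ (0,1), q > 0. Let μ be a probability measure on configurations with μ({ω}) > 0 for every configuration ω, and suppose that for every edge e ∈ E and every η : E∖{e} → Bool, with C_η := {ω : ω e' = η e' for all e' ≠ e}, one has μ(C_η ∩ {ω : ω e = true}) = r · μ(C_η), where r = p if the two endpoints of e are connected in the multigraph on V/α with edge set {e' ≠ e : η e' = true}, and r = p' = p/(p+q(1−p)) otherwise. Then μ = φ^α_{G,p,q}. -/

import Mathlib

open scoped Classical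

noncomputable section

namespace FKPaper

variable {V E : Type*}

/-- One-step adjacency between wired vertices through an edge in `F`. -/
def Step (ends : E → Sym2 V) (α : Setoid V) (F : Set E) (x y : Quotient α) : Prop :=
  ∃ e ∈ F, Sym2.map (Quotient.mk α) (ends e) = s(x, y)

/-- Setoid of connected components of the wired multigraph with edge set `F`. -/
def connSetoid (ends : E → Sym2 V) (α : Setoid V) (F : Set E) : Setoid (Quotient α) :=
  Relation.EqvGen.setoid (Step ends α F)

/-- Connectivity in the wired multigraph with edge set `F`. -/
def Conn (ends : E → Sym2 V) (α : Setoid V) (F : Set E) (x y : Quotient α) : Prop :=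
  (connSetoid ends α F).r x y

/-- The two endpoints of `e` are joined in the wired multigraph with edge set `F`. -/
def EndsConn (ends : E → Sym2 V) (α : Setoid V) (F : Set E) (e : E) : Prop :=
  ∀ x y : V, ends e = s(x, y) → Conn ends α F (Quotient.mk α x) (Quotient.mk α y)

/-- Number of connected components `k(ω, α)`. -/
def numComponents (ends : E → Sym2 V) (α : Setoid V) (ω : E → Bool) : ℕ :=
  Nat.card (Quotient (connSetoid ends α {e | ω e = true}))

/-- `p' = p / (p + q (1 - p))`. -/
def pPrime (p q : ℝ) : ℝ := p / (p + q * (1 - p))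

/-- Total mass of a set under a weight function. -/
def massOf {ι : Type*} [Fintype ι] (w : ι → ℝ) (A : Set ι) : ℝ :=
  ∑ x ∈ Finset.univ.filter (· ∈ A), w x

/-- Normalized probability of a set under a weight function. -/
def probOf {ι : Type*} [Fintype ι] (w : ι → ℝ) (A : Set ι) : ℝ :=
  massOf w A / massOf w Set.univ

/-- FK weight of a configuration. -/
def fkWeight [Fintype E] (ends : E → Sym2 V) (α : Setoid V) (p q : ℝ) (ω : E → Bool) : ℝ :=
  p ^ (Finset.univ.filter fun e => ω e = true).card *
    (1 - p) ^ (Finset.univ.filter fun e => ω e = false).card *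
    q ^ numComponents ends α ω

/-- The FK (random cluster) probability measure `φ^α_{G,p,q}`. -/
def fkProb [Fintype E] (ends : E → Sym2 V) (α : Setoid V) (p q : ℝ)
    (A : Set (E → Bool)) : ℝ :=
  probOf (fkWeight ends α p q) A

/-- Inhomogeneous Bernoulli weight. -/
def berWeight [Fintype E] (pe : E → ℝ) (ω : E → Bool) : ℝ :=
  ∏ e, if ω e = true then pe e else 1 - pe e

/-- Inhomogeneous Bernoulli product measure `P_{(p_e)}`. -/
def berProb [Fintype E] (pe : E → ℝ) (A : Set (E → Bool)) : ℝ :=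
  probOf (berWeight pe) A

/-- Increasing sets of configurations. -/
def Increasing (A : Set (E → Bool)) : Prop :=
  ∀ ⦃ω ω' : E → Bool⦄, ω ∈ A → (∀ e, ω e ≤ ω' e) → ω' ∈ A

/-- Stochastic domination `μ ≼ ν`. -/
def StochDom [Fintype E] (μ ν : Set (E → Bool) → ℝ) : Prop :=
  ∀ A : Set (E → Bool), Increasing A → μ A ≤ ν A

/-- `Q_F(e)`: cutsets for `e` included in `F`. -/
def Cutsets (ends : E → Sym2 V) (α : Setoid V) (F : Set E) (e : E) : Set (Set E) :=
  {χ | χ ⊆ F ∧ ¬ EndsConn ends α {e' | e' ∉ χ ∧ e' ≠ e} e}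

/-!
Opening an edge either joins two components or changes none, so the ratio of the FK weights of the
two configurations that differ exactly at `e` is explicit, and the FK weight has the prescribed
single-edge conditional probabilities. Conversely, these probabilities determine the ratio of the
masses of any two configurations that differ at a single edge. Every configuration is reached from
any other by changing one edge at a time, so they determine the weight up to a constant factor.
-/

section MergeClasses

variable {X : Type*} {s : Setoid X} {a b : X}

/-- The setoid obtained from `s` by merging the classes of `a` and `b`, encoded as the kernel of the
map to `Quotient s` that redirects the class of `b` to the class of `a`. It carries the effect of
opening an edge on the connected components. -/
def mergeClasses (s : Setoid X) (a b : X) : Setoid X :=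
  Setoid.ker (Function.update id (Quotient.mk s b) (Quotient.mk s a) ∘ Quotient.mk s)

theorem mergeClasses_le_iff {t : Setoid X} : mergeClasses s a b ≤ t ↔ s ≤ t ∧ t a b := by
  refine ⟨fun h => ⟨fun u v huv => h ?_, h ?_⟩, fun ⟨hst, hab⟩ u v huv => ?_⟩
  · exact congrArg (Function.update id _ _) (Quotient.sound huv)
  · exact Setoid.ker_def.2 (by simp [Function.update_apply])
  · have map_update (c : Quotient s) :
        Setoid.map_of_le hst (Function.update id (Quotient.mk s b) (Quotient.mk s a) c) =
          Setoid.map_of_le hst c := by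
      rcases eq_or_ne c (Quotient.mk s b) with rfl | hc
      · rw [Function.update_self]
        exact Quotient.sound hab
      · rw [Function.update_of_ne hc, id]
    exact Quotient.exact <|
      (map_update _).symm.trans ((congrArg (Setoid.map_of_le hst) huv).trans (map_update _))

theorem mergeClasses_eq_self (hab : s a b) : mergeClasses s a b = s :=
  le_antisymm (mergeClasses_le_iff.2 ⟨le_rfl, hab⟩) (mergeClasses_le_iff.1 le_rfl).1

theorem range_update_id [DecidableEq X] (hab : a ≠ b) :
    Set.range (Function.update id b a) = ({b}ᶜ : Set X) := by
  ext x
  refine ⟨?_, fun hx => ⟨x, Function.update_of_ne hx _ _⟩⟩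
  rintro ⟨y, rfl⟩
  rcases eq_or_ne y b with rfl | hy
  · simpa using hab
  · simp [hy]

theorem card_quotient_mergeClasses_add_one [Finite (Quotient s)] (hab : ¬ s a b) :
    Nat.card (Quotient (mergeClasses s a b)) + 1 = Nat.card (Quotient s) := by
  have hne : Quotient.mk s a ≠ Quotient.mk s b := fun h => hab (Quotient.exact h)
  have hcard : Nat.card (Quotient (mergeClasses s a b)) =
      ({Quotient.mk s b}ᶜ : Set (Quotient s)).ncard := by
    rw [mergeClasses, ← range_update_id hne, ← Quotient.mk_surjective.range_comp]
    exact Nat.card_congr (Setoid.quotientKerEquivRange _)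
  rw [hcard, add_comm, ← Set.ncard_singleton (Quotient.mk s b), Set.ncard_add_ncard_compl]

end MergeClasses

section Connectivity

variable {ends : E → Sym2 V} {α : Setoid V} {F : Set E} {e : E} {x y : V}

theorem connSetoid_le_iff {t : Setoid (Quotient α)} :
    connSetoid ends α F ≤ t ↔ ∀ u v, Step ends α F u v → t u v :=
  Setoid.gi.gc _ _

theorem connSetoid_insert (he : ends e = s(x, y)) :
    connSetoid ends α (insert e F) =
      mergeClasses (connSetoid ends α F) (Quotient.mk α x) (Quotient.mk α y) := by
  refine eq_of_forall_ge_iff fun t => ?_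
  simp only [mergeClasses_le_iff, connSetoid_le_iff]
  constructor
  · intro h
    exact ⟨fun u v ⟨f, hf, hfe⟩ => h u v ⟨f, Set.mem_insert_of_mem e hf, hfe⟩,
      h _ _ ⟨e, Set.mem_insert e F, by rw [he, Sym2.map_mk]⟩⟩
  · rintro ⟨hF, hxy⟩ u v ⟨f, rfl | hf, hfe⟩
    · rw [he, Sym2.map_mk, Sym2.eq_iff] at hfe
      rcases hfe with ⟨rfl, rfl⟩ | ⟨rfl, rfl⟩
      exacts [hxy, t.symm' hxy]
    · exact hF u v ⟨f, hf, hfe⟩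

theorem endsConn_iff (he : ends e = s(x, y)) :
    EndsConn ends α F e ↔ Conn ends α F (Quotient.mk α x) (Quotient.mk α y) := by
  refine ⟨fun h => h x y he, fun h x' y' he' => ?_⟩
  rw [he, Sym2.eq_iff] at he'
  rcases he' with ⟨rfl, rfl⟩ | ⟨rfl, rfl⟩
  exacts [h, (connSetoid ends α F).symm' h]

theorem card_components_insert [Finite (Quotient α)] (ends : E → Sym2 V) (F : Set E) (e : E) :
    Nat.card (Quotient (connSetoid ends α (insert e F))) +
        (if EndsConn ends α F e then 0 else 1) =
      Nat.card (Quotient (connSetoid ends α F)) := by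
  obtain ⟨x, y, he⟩ : ∃ x y, ends e = s(x, y) := Sym2.exists.1 ⟨_, rfl⟩
  rw [connSetoid_insert he]
  split_ifs with h
  · rw [mergeClasses_eq_self ((endsConn_iff he).1 h), add_zero]
  · exact card_quotient_mergeClasses_add_one (mt (endsConn_iff he).2 h)

theorem setOf_update_true (ω : E → Bool) (e : E) :
    {f | Function.update ω e true f = true} = insert e {f | f ≠ e ∧ ω f = true} := by
  ext f
  by_cases hf : f = e <;> simp [hf]

theorem setOf_update_false (ω : E → Bool) (e : E) :
    {f | Function.update ω e false f = true} = {f | f ≠ e ∧ ω f = true} := by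
  ext f
  by_cases hf : f = e <;> simp [hf]

theorem numComponents_update_false [Finite (Quotient α)] (ends : E → Sym2 V) (ω : E → Bool)
    (e : E) :
    numComponents ends α (Function.update ω e false) =
      numComponents ends α (Function.update ω e true) +
        if EndsConn ends α {f | f ≠ e ∧ ω f = true} e then 0 else 1 := by
  rw [numComponents, numComponents, setOf_update_true, setOf_update_false, card_components_insert]

end Connectivity

section SingleEdge

theorem massOf_coe {ι : Type*} [Fintype ι] (w : ι → ℝ) (S : Finset ι) :
    massOf w (S : Set ι) = ∑ x ∈ S, w x := by
  simp [massOf]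

theorem setOf_forall_ne_eq (η : E → Bool) (e : E) :
    {ω : E → Bool | ∀ f ≠ e, ω f = η f} =
      {Function.update η e true, Function.update η e false} := by
  ext ω
  cases h : ω e <;> simp [Function.eq_update_iff, h]

theorem setOf_forall_ne_eq_inter_setOf_true (η : E → Bool) (e : E) :
    {ω : E → Bool | ∀ f ≠ e, ω f = η f} ∩ {ω | ω e = true} = {Function.update η e true} := by
  ext ω
  simp [Function.eq_update_iff, and_comm]

variable [Fintype E] {w μ : (E → Bool) → ℝ} {r : E → (E → Bool) → ℝ}

/-- Under the weight `w`, the edge `e` is open with conditional probability `r e η` given that every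
other edge is in the state prescribed by `η`. The value `η e` is a dummy, which replaces functions
on the complement of `e`; the identity is multiplied out to avoid dividing by a zero mass. -/
def HasOpenProb (w : (E → Bool) → ℝ) (r : E → (E → Bool) → ℝ) : Prop :=
  ∀ e η, massOf w ({ω | ∀ f ≠ e, ω f = η f} ∩ {ω | ω e = true}) =
    r e η * massOf w {ω | ∀ f ≠ e, ω f = η f}

theorem hasOpenProb_iff :
    HasOpenProb w r ↔ ∀ e η, w (Function.update η e true) =
      r e η * (w (Function.update η e true) + w (Function.update η e false)) := by
  refine forall₂_congr fun e η => ?_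
  have hne : Function.update η e true ≠ Function.update η e false :=
    (Function.update_injective η e).ne (by decide)
  rw [setOf_forall_ne_eq_inter_setOf_true, setOf_forall_ne_eq, ← Finset.coe_singleton,
    ← Finset.coe_pair, massOf_coe, massOf_coe, Finset.sum_singleton, Finset.sum_pair hne]

theorem HasOpenProb.div_update_eq (hμ : HasOpenProb μ r) (hw : HasOpenProb w r)
    (hw₀ : ∀ ω, w ω ≠ 0) (e : E) (η : E → Bool) :
    μ (Function.update η e true) / w (Function.update η e true) =
      μ (Function.update η e false) / w (Function.update η e false) := by
  have hμe := hasOpenProb_iff.1 hμ e η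
  have hwe := hasOpenProb_iff.1 hw e η
  have hr : r e η ≠ 0 := fun h => hw₀ (Function.update η e true) (by rw [hwe, h, zero_mul])
  rw [div_eq_div_iff (hw₀ _) (hw₀ _)]
  refine mul_left_cancel₀ hr ?_
  linear_combination
    w (Function.update η e true) * hμe - μ (Function.update η e true) * hwe

theorem eq_of_forall_update_eq {ι β : Type*} {π : ι → Type*} [Finite ι] (f : (∀ i, π i) → β)
    (hf : ∀ x i c, f (Function.update x i c) = f x) (x y : ∀ i, π i) : f x = f y := by
  have := Fintype.ofFinite ι
  have piecewise_eq (s : Finset ι) : f (s.piecewise x y) = f y := by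
    induction s using Finset.induction_on with
    | empty => rw [Finset.piecewise_empty]
    | insert i s _ ih => rw [Finset.piecewise_insert, hf, ih]
  simpa using piecewise_eq Finset.univ

theorem eq_of_forall_update_true_eq_update_false {ι β : Type*} [Finite ι] (f : (ι → Bool) → β)
    (hf : ∀ i ω, f (Function.update ω i true) = f (Function.update ω i false))
    (ω ω' : ι → Bool) : f ω = f ω' := by
  refine eq_of_forall_update_eq f (fun ω i c => ?_) ω ω'
  have update_eq (d : Bool) : f (Function.update ω i d) = f (Function.update ω i false) := by
    cases d
    exacts [rfl, hf i ω]
  rw [update_eq c, ← update_eq (ω i), Function.update_eq_self]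

theorem probOf_singleton_eq_of_proportional {ι : Type*} [Fintype ι] {w μ : ι → ℝ} {c : ℝ}
    (hμw : ∀ x, μ x = c * w x) (hsum : ∑ x, μ x = 1) (x : ι) : probOf w {x} = μ x := by
  have hc : c * ∑ x, w x = 1 := by simpa only [Finset.mul_sum, ← hμw] using hsum
  have hw : ∑ x, w x ≠ 0 := right_ne_zero_of_mul_eq_one hc
  rw [probOf, ← Finset.coe_singleton, ← Finset.coe_univ, massOf_coe, massOf_coe,
    Finset.sum_singleton, div_eq_iff hw, hμw]
  linear_combination -w x * hc

theorem HasOpenProb.eq_probOf (hμ : HasOpenProb μ r) (hsum : ∑ ω, μ ω = 1)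
    (hw : HasOpenProb w r) (hw₀ : ∀ ω, w ω ≠ 0) (ω : E → Bool) : μ ω = probOf w {ω} := by
  have hconst := eq_of_forall_update_true_eq_update_false (fun ω => μ ω / w ω)
    (hμ.div_update_eq hw hw₀)
  exact (probOf_singleton_eq_of_proportional
    (fun ω' => (div_eq_iff (hw₀ ω')).1 (hconst ω' ω)) hsum ω).symm

end SingleEdge

section FKWeight

variable [Fintype E] {p q : ℝ}

theorem berWeight_update_true_mul (pe : E → ℝ) (ω : E → Bool) (e : E) :
    berWeight pe (Function.update ω e true) * (1 - pe e) =
      berWeight pe (Function.update ω e false) * pe e := by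
  have berWeight_update (b : Bool) : berWeight pe (Function.update ω e b) =
      (if b = true then pe e else 1 - pe e) *
        ∏ f ∈ Finset.univ.erase e, if ω f = true then pe f else 1 - pe f := by
    rw [berWeight, ← Finset.mul_prod_erase _ _ (Finset.mem_univ e), Function.update_self]
    congr 1
    refine Finset.prod_congr rfl fun f hf => ?_
    rw [Function.update_of_ne (Finset.ne_of_mem_erase hf)]
  rw [berWeight_update, berWeight_update, if_pos rfl, if_neg Bool.false_ne_true]
  ring

theorem fkWeight_eq_berWeight_mul (ends : E → Sym2 V) (α : Setoid V) (p q : ℝ) (ω : E → Bool) :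
    fkWeight ends α p q ω = berWeight (fun _ => p) ω * q ^ numComponents ends α ω := by
  simp [fkWeight, berWeight, Finset.prod_ite]

theorem fkWeight_ne_zero (ends : E → Sym2 V) (α : Setoid V) (hp₀ : p ≠ 0) (hp₁ : p ≠ 1)
    (hq : q ≠ 0) (ω : E → Bool) : fkWeight ends α p q ω ≠ 0 :=
  mul_ne_zero (mul_ne_zero (pow_ne_zero _ hp₀) (pow_ne_zero _ (sub_ne_zero.2 hp₁.symm)))
    (pow_ne_zero _ hq)

variable {α : Setoid V} [Finite (Quotient α)]

theorem fkWeight_update_true_mul (ends : E → Sym2 V) (p q : ℝ) (ω : E → Bool) (e : E) :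
    fkWeight ends α p q (Function.update ω e true) *
        ((1 - p) * if EndsConn ends α {f | f ≠ e ∧ ω f = true} e then 1 else q) =
      fkWeight ends α p q (Function.update ω e false) * p := by
  have hber := berWeight_update_true_mul (fun _ => p) ω e
  rw [fkWeight_eq_berWeight_mul, fkWeight_eq_berWeight_mul, numComponents_update_false, pow_add]
  split_ifs
  · linear_combination q ^ numComponents ends α (Function.update ω e true) * hber
  · linear_combination q ^ numComponents ends α (Function.update ω e true) * q * hber

theorem hasOpenProb_fkWeight (ends : E → Sym2 V) (hpq : p + q * (1 - p) ≠ 0) :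
    HasOpenProb (fkWeight ends α p q) fun e η =>
      if EndsConn ends α {f | f ≠ e ∧ η f = true} e then p else pPrime p q := by
  refine hasOpenProb_iff.2 fun e η => ?_
  have hratio := fkWeight_update_true_mul (α := α) ends p q η e
  split_ifs at hratio ⊢
  · linear_combination hratio
  · rw [pPrime, div_mul_eq_mul_div, eq_div_iff hpq]
    linear_combination hratio

theorem fk_unique_of_conditional_general (ends : E → Sym2 V) (hp₀ : p ≠ 0) (hp₁ : p ≠ 1)
    (hq : q ≠ 0) (hpq : p + q * (1 - p) ≠ 0) {μ : (E → Bool) → ℝ} (hsum : ∑ ω, μ ω = 1)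
    (hcond : HasOpenProb μ fun e η =>
      if EndsConn ends α {f | f ≠ e ∧ η f = true} e then p else pPrime p q)
    (ω : E → Bool) : μ ω = fkProb ends α p q {ω} :=
  hcond.eq_probOf hsum (hasOpenProb_fkWeight ends hpq) (fkWeight_ne_zero ends α hp₀ hp₁ hq) ω

end FKWeight

/-- **The FK measure is the unique probability measure with the prescribed single-edge
conditional probabilities.** -/
theorem fk_unique_of_conditional
    {V E : Type*} [Fintype V] [Fintype E]
    (ends : E → Sym2 V) (α : Setoid V)
    (p q : ℝ) (hp : p ∈ Set.Ioo (0 : ℝ) 1) (hq : 0 < q)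
    (μ : (E → Bool) → ℝ)
    (hpos : ∀ ω, 0 < μ ω) (hsum : ∑ ω, μ ω = 1)
    (hcond : ∀ (e : E) (η : E → Bool),
      massOf μ ({ω | ∀ e' ≠ e, ω e' = η e'} ∩ {ω | ω e = true})
        = (if EndsConn ends α {e' | e' ≠ e ∧ η e' = true} e then p else pPrime p q) *
            massOf μ {ω | ∀ e' ≠ e, ω e' = η e'}) :
    ∀ ω : E → Bool, μ ω = fkProb ends α p q {ω} := by
  have hpq : p + q * (1 - p) ≠ 0 := (add_pos hp.1 (mul_pos hq (sub_pos.2 hp.2))).ne'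
  exact fk_unique_of_conditional_general ends hp.1.ne' hp.2.ne hq.ne' hpq hsum hcond

end FKPaper
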